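/- A Büchi automaton A over a finite alphabet Σ accepts some sequence if and only if A has a match; moreover, if (x, y) is a match of A then A accepts the ultimately periodic sequence x·y^ω. -/

import Mathlib

namespace Buechi

/-- Nonempty finite strings over `α`, given as a head together with a tail. -/
abbrev NStr (α : Type*) : Type _ := α × List α

/-- The list of symbols of a nonempty string. -/
def NStr.toList {α : Type*} (s : NStr α) : List α := s.1 :: s.2

/-- Büchi automata over alphabet `α`: a finite type of states, a transition
relation, initial states and accepting states. -/
structure BA (α : Type*) where
  Q : Type
  fin : Fintype Q
  trans : Q → α → Q → Prop
  init : Q → Prop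
  accept : Q → Prop

/-- Büchi acceptance: there is a run starting in an initial state, respecting the
transition relation, and visiting accepting states infinitely often. -/
def BA.Accepts {α : Type*} (M : BA α) (σ : ℕ → α) : Prop :=
  ∃ ρ : ℕ → M.Q, M.init (ρ 0) ∧ (∀ n, M.trans (ρ n) (σ n) (ρ (n + 1))) ∧
    ∀ k, ∃ n, k ≤ n ∧ M.accept (ρ n)

/-- `M.StepsL p x q`: there is a path on the list `x` from `p` to `q` whose
consecutive transitions are labelled by the successive symbols of `x`. -/
def BA.StepsL {α : Type*} (M : BA α) : M.Q → List α → M.Q → Prop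
  | p, [], q => p = q
  | p, a :: x, q => ∃ r, M.trans p a r ∧ M.StepsL r x q

/-- `M.StepsAccL p x q`: there is a path on `x` from `p` to `q` passing through an
accepting state before its last position. -/
def BA.StepsAccL {α : Type*} (M : BA α) : M.Q → List α → M.Q → Prop
  | _, [], _ => False
  | p, a :: x, q => ∃ r, M.trans p a r ∧ ((M.accept p ∧ M.StepsL r x q) ∨ M.StepsAccL r x q)

/-- `p ⇒x q` for a nonempty string `x`. -/
def BA.Steps {α : Type*} (M : BA α) (p : M.Q) (x : NStr α) (q : M.Q) : Prop :=
  M.StepsL p x.toList q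

/-- `p ⇒x! q` for a nonempty string `x`. -/
def BA.StepsAcc {α : Type*} (M : BA α) (p : M.Q) (x : NStr α) (q : M.Q) : Prop :=
  M.StepsAccL p x.toList q

/-- `(x, y)` is a match of `M`: there are states `p`, `q` with `p` initial,
`p ⇒x q` and `q ⇒y! q`. -/
def BA.IsMatch {α : Type*} (M : BA α) (x y : NStr α) : Prop :=
  ∃ p q, M.init p ∧ M.Steps p x q ∧ M.StepsAcc q y q

/-- The ultimately periodic sequence `x·y^ω = x y y y ⋯`. -/
def upSeq {α : Type*} (x y : NStr α) (n : ℕ) : α :=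
  if h : n < x.toList.length then x.toList.get ⟨n, h⟩
  else y.toList.get ⟨(n - x.toList.length) % y.toList.length,
    Nat.mod_lt _ (by simp [NStr.toList])⟩

/-! Since there are finitely many states, an accepting run visits some accepting state `q` at two
positive times `m < n`. The symbols read before time `m` and between times `m` and `n` form a
match. Conversely, for a match `(x, y)` with states `p` and `q`, going around the `y`-loop at `q`
forever gives a run on `y^ω` that meets an accepting state in every round, and the path on `x` is
prepended to it one transition at a time. -/

section

open Stream'

theorem get_cycle {α : Type*} (l : List α) (hl : l ≠ []) (n : ℕ) :
    (cycle l hl).get n = l[n % l.length]'(Nat.mod_lt n (List.length_pos_of_ne_nil hl)) := by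
  induction n using Nat.strong_induction_on with
  | _ n ih =>
    rw [cycle_eq]
    rcases lt_or_ge n l.length with hn | hn
    · simp only [get_append_left n l _ hn, Nat.mod_eq_of_lt hn]
    · obtain ⟨k, rfl⟩ := Nat.exists_eq_add_of_le hn
      have hk : k < l.length + k := Nat.lt_add_of_pos_left (List.length_pos_of_ne_nil hl)
      simp only [get_append_right, ih k hk, Nat.add_mod_left]

theorem exists_lt_eq_of_forall_exists_ge {Q : Type*} [Finite Q] {P : Q → Prop} {ρ : ℕ → Q}
    (hρ : ∀ k, ∃ n, k ≤ n ∧ P (ρ n)) (k : ℕ) : ∃ m n, k ≤ m ∧ m < n ∧ ρ m = ρ n ∧ P (ρ m) := by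
  have hinf : {n | k ≤ n ∧ P (ρ n)}.Infinite := by
    refine Set.infinite_of_forall_exists_gt fun a => ?_
    obtain ⟨n, hn, hPn⟩ := hρ (k + (a + 1))
    exact ⟨n, ⟨by omega, hPn⟩, by omega⟩
  obtain ⟨m, ⟨hkm, hPm⟩, n, -, hmn, heq⟩ :=
    hinf.exists_lt_map_eq_of_mapsTo (Set.mapsTo_univ ρ _) Set.finite_univ
  exact ⟨m, n, hkm, hmn, heq, hPm⟩

variable {α : Type*}

theorem NStr.toList_ne_nil (s : NStr α) : s.toList ≠ [] :=
  List.cons_ne_nil _ _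

theorem upSeq_eq_append_cycle (x y : NStr α) :
    upSeq x y = x.toList ++ₛ cycle y.toList y.toList_ne_nil := by
  refine Stream'.ext fun n => ?_
  rcases lt_or_ge n x.toList.length with hn | hn
  · rw [get_append_left n _ _ hn]
    exact dif_pos hn
  · obtain ⟨k, rfl⟩ := Nat.exists_eq_add_of_le hn
    rw [get_append_right, get_cycle]
    simp [Stream'.get, upSeq]

/-- The first `n + 1` symbols of the sequence `σ`. -/
def NStr.ofStream (σ : Stream' α) (n : ℕ) : NStr α :=
  (σ.head, σ.tail.take n)

namespace BA

variable {M : BA α}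

/-- The states of `ρ` form a path of `M` on the list `l`. The path consists of the first
`l.length + 1` entries of `ρ`; the later ones are arbitrary. -/
def IsPath (M : BA α) (ρ : Stream' M.Q) (l : List α) : Prop :=
  ∀ i (h : i < l.length), M.trans (ρ.get i) l[i] (ρ.get (i + 1))

/-- `ρ` is a run of `M` on `σ`, from an arbitrary state. -/
def IsRun (M : BA α) (ρ : Stream' M.Q) (σ : Stream' α) : Prop :=
  ∀ n, M.trans (ρ.get n) (σ.get n) (ρ.get (n + 1))

/-- `M` has a run on `σ` that starts in the state `p`, initial or not, and visits accepting states
infinitely often. -/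
def AcceptsFrom (M : BA α) (p : M.Q) (σ : Stream' α) : Prop :=
  ∃ ρ : Stream' M.Q, ρ.head = p ∧ M.IsRun ρ σ ∧ ∀ k, ∃ n, k ≤ n ∧ M.accept (ρ.get n)

theorem accepts_iff_exists_acceptsFrom {σ : Stream' α} :
    M.Accepts σ ↔ ∃ p, M.init p ∧ M.AcceptsFrom p σ := by
  constructor
  · rintro ⟨ρ, hinit, hρ, hacc⟩
    exact ⟨ρ 0, hinit, ρ, rfl, hρ, hacc⟩
  · rintro ⟨_, hinit, ρ, rfl, hρ, hacc⟩
    exact ⟨ρ, hinit, hρ, hacc⟩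

theorem AcceptsFrom.cons {p r : M.Q} {a : α} {σ : Stream' α} (hpr : M.trans p a r)
    (h : M.AcceptsFrom r σ) : M.AcceptsFrom p (a :: σ) := by
  obtain ⟨ρ, rfl, hρ, hacc⟩ := h
  refine ⟨p :: ρ, rfl, Nat.rec hpr fun n _ => hρ n, fun k => ?_⟩
  obtain ⟨n, hkn, hn⟩ := hacc k
  exact ⟨n + 1, Nat.le_succ_of_le hkn, hn⟩

theorem AcceptsFrom.append {p q : M.Q} {l : List α} {σ : Stream' α} (hpq : M.StepsL p l q)
    (h : M.AcceptsFrom q σ) : M.AcceptsFrom p (l ++ₛ σ) := by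
  induction l generalizing p with
  | nil => exact hpq ▸ h
  | cons a l ih =>
    obtain ⟨r, hpr, hrq⟩ := hpq
    exact (ih hrq).cons hpr

theorem IsPath.cons {p : M.Q} {a : α} {ρ : Stream' M.Q} {l : List α}
    (hp : M.trans p a ρ.head) (hρ : M.IsPath ρ l) : M.IsPath (p :: ρ) (a :: l)
  | 0, _ => hp
  | i + 1, hi => hρ i (Nat.lt_of_succ_lt_succ hi)

theorem StepsL.exists_isPath {p q : M.Q} {l : List α} (h : M.StepsL p l q) :
    ∃ ρ : Stream' M.Q, ρ.head = p ∧ ρ.get l.length = q ∧ M.IsPath ρ l := by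
  induction l generalizing p with
  | nil => exact ⟨const p, rfl, h, fun _ hi => absurd hi (Nat.not_lt_zero _)⟩
  | cons a l ih =>
    obtain ⟨r, hpr, hrq⟩ := h
    obtain ⟨ρ, rfl, hlast, hρ⟩ := ih hrq
    exact ⟨p :: ρ, rfl, hlast, hρ.cons hpr⟩

theorem StepsAccL.exists_isPath {p q : M.Q} {l : List α} (h : M.StepsAccL p l q) :
    ∃ ρ : Stream' M.Q, ρ.head = p ∧ ρ.get l.length = q ∧ M.IsPath ρ l ∧
      ∃ i < l.length, M.accept (ρ.get i) := by
  induction l generalizing p with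
  | nil => exact h.elim
  | cons a l ih =>
    obtain ⟨r, hpr, ⟨hacc, hrq⟩ | hrq⟩ := h
    · obtain ⟨ρ, rfl, hlast, hρ⟩ := StepsL.exists_isPath hrq
      exact ⟨p :: ρ, rfl, hlast, hρ.cons hpr, 0, Nat.zero_lt_succ _, hacc⟩
    · obtain ⟨ρ, rfl, hlast, hρ, i, hi, hacc⟩ := ih hrq
      exact ⟨p :: ρ, rfl, hlast, hρ.cons hpr, i + 1, Nat.succ_lt_succ hi, hacc⟩

theorem IsPath.isRun_cycle {ρ : Stream' M.Q} {l : List α} (hl : l ≠ []) (hρ : M.IsPath ρ l)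
    (hloop : ρ.get l.length = ρ.head) :
    M.IsRun (fun n => ρ.get (n % l.length)) (cycle l hl) := by
  intro n
  have hlt : n % l.length < l.length := Nat.mod_lt n (List.length_pos_of_ne_nil hl)
  have hnext : ρ.get ((n + 1) % l.length) = ρ.get (n % l.length + 1) := by
    rw [← Nat.mod_add_mod]
    rcases (show n % l.length + 1 ≤ l.length from hlt).lt_or_eq with h | h
    · rw [Nat.mod_eq_of_lt h]
    · rw [h, Nat.mod_self, hloop]
  have hstep := hρ (n % l.length) hlt
  rwa [← hnext, ← get_cycle l hl] at hstep

theorem StepsAccL.acceptsFrom_cycle {q : M.Q} {l : List α} (hl : l ≠ []) (h : M.StepsAccL q l q) :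
    M.AcceptsFrom q (cycle l hl) := by
  obtain ⟨ρ, hfirst, hlast, hρ, i, hi, hacc⟩ := StepsAccL.exists_isPath h
  have hhead : ρ.get (0 % l.length) = q := by rwa [Nat.zero_mod]
  refine ⟨fun n => ρ.get (n % l.length), hhead, hρ.isRun_cycle hl (hlast.trans hfirst.symm),
    fun k => ⟨i + l.length * k, ?_, ?_⟩⟩
  · exact (Nat.le_mul_of_pos_left k (List.length_pos_of_ne_nil hl)).trans (Nat.le_add_left _ _)
  · simpa only [Stream'.get, Nat.add_mul_mod_self_left, Nat.mod_eq_of_lt hi] using hacc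

theorem IsMatch.accepts_upSeq {x y : NStr α} (h : M.IsMatch x y) : M.Accepts (upSeq x y) := by
  obtain ⟨p, q, hp, hx, hy⟩ := h
  rw [upSeq_eq_append_cycle]
  exact accepts_iff_exists_acceptsFrom.mpr
    ⟨p, hp, (StepsAccL.acceptsFrom_cycle y.toList_ne_nil hy).append hx⟩

theorem IsRun.drop {ρ : Stream' M.Q} {σ : Stream' α} (hρ : M.IsRun ρ σ) (m : ℕ) :
    M.IsRun (ρ.drop m) (σ.drop m) := fun n => by
  simpa only [get_drop, ← Nat.add_assoc] using hρ (m + n)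

theorem IsRun.stepsL_take {ρ : Stream' M.Q} {σ : Stream' α} (hρ : M.IsRun ρ σ) (n : ℕ) :
    M.StepsL ρ.head (σ.take n) (ρ.get n) := by
  induction n generalizing ρ σ with
  | zero => rfl
  | succ n ih => exact ⟨ρ.get 1, hρ 0, ih (hρ.drop 1)⟩

theorem IsRun.stepsAcc_ofStream {ρ : Stream' M.Q} {σ : Stream' α} (hρ : M.IsRun ρ σ)
    (hacc : M.accept ρ.head) (n : ℕ) : M.StepsAcc ρ.head (.ofStream σ n) (ρ.get (n + 1)) :=
  ⟨ρ.get 1, hρ 0, Or.inl ⟨hacc, (hρ.drop 1).stepsL_take n⟩⟩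

theorem Accepts.exists_isMatch {σ : Stream' α} (h : M.Accepts σ) : ∃ x y, M.IsMatch x y := by
  obtain ⟨_, hinit, ρ, rfl, hρ, hacc⟩ := accepts_iff_exists_acceptsFrom.mp h
  have : Fintype M.Q := M.fin
  obtain ⟨m, n, hm, hmn, hloop, haccm⟩ := exists_lt_eq_of_forall_exists_ge hacc 1
  obtain ⟨a, rfl⟩ := Nat.exists_eq_add_of_le' hm
  obtain ⟨b, rfl⟩ := Nat.exists_eq_add_of_lt hmn
  have hx : M.Steps ρ.head (.ofStream σ a) (ρ.get (a + 1)) := hρ.stepsL_take (a + 1)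
  have hhead : (ρ.drop (a + 1)).head = ρ.get (a + 1) := get_drop 0 (a + 1) ρ
  have hlast : (ρ.drop (a + 1)).get (b + 1) = ρ.get (a + 1) :=
    (get_drop (b + 1) (a + 1) ρ).trans hloop.symm
  have hy := (hρ.drop (a + 1)).stepsAcc_ofStream (hhead ▸ haccm) b
  rw [hhead, hlast] at hy
  exact ⟨_, _, _, _, hinit, hx, hy⟩

end BA

theorem satisfiable_iff_match_general (A : BA α) :
    ((∃ σ : ℕ → α, A.Accepts σ) ↔ ∃ x y : NStr α, A.IsMatch x y) ∧
      ∀ x y : NStr α, A.IsMatch x y → A.Accepts (upSeq x y) :=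
  ⟨⟨fun ⟨_, hσ⟩ => hσ.exists_isMatch, fun ⟨_, _, hxy⟩ => ⟨_, hxy.accepts_upSeq⟩⟩,
    fun _ _ hxy => hxy.accepts_upSeq⟩

end

/-- A Büchi automaton is satisfiable iff it has a match; moreover every match
`(x, y)` yields an accepted ultimately periodic sequence `x·y^ω`. -/
theorem satisfiable_iff_match {α : Type*} [Fintype α] (A : BA α) :
    ((∃ σ : ℕ → α, A.Accepts σ) ↔ ∃ x y : NStr α, A.IsMatch x y) ∧
      ∀ x y : NStr α, A.IsMatch x y → A.Accepts (upSeq x y) :=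
  satisfiable_iff_match_general A

end Buechi
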